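/- arXiv:2307.10448 — 4 statements merged into one kernel-verified Lean document; each statement's English description precedes it below -/
import Mathlib

section
/- Let G be a real m-by-n matrix, d ∈ ℝ^m, λ > 0, let D be a real l-by-n matrix, let ω_1,…,ω_l be positive reals and p_1,…,p_l reals with p_j ≥ 1 for every j. If the only vector u ∈ ℝ^n satisfying Gu = 0 and Du = 0 is u = 0, then the objective functional J(u) = ‖d − Gu‖₂² + λ · Σ_{j=1}^{l} ω_j |(Du)_j|^{p_j} attains a global minimum on ℝ^n, i.e., there exists u* ∈ ℝ^n with J(u*) ≤ J(u) for all u ∈ ℝ^n. -/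
/-- If the kernels of `G` and `D` intersect trivially, then the objective
`J(u) = ‖d − Gu‖₂² + λ ∑ j ω j |(Du)_j|^(p j)` (with `λ > 0`, positive weights and
exponents `p j ≥ 1`) attains a global minimum on `ℝ^n`. -/
theorem stmt_2 (m n l : ℕ) (G : Matrix (Fin m) (Fin n) ℝ) (d : Fin m → ℝ)
    (lam : ℝ) (hlam : 0 < lam) (D : Matrix (Fin l) (Fin n) ℝ)
    (ω p : Fin l → ℝ) (hω : ∀ j, 0 < ω j) (hp : ∀ j, 1 ≤ p j)
    (hker : ∀ u : Fin n → ℝ, G.mulVec u = 0 → D.mulVec u = 0 → u = 0) :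
    ∃ ustar : Fin n → ℝ, ∀ u : Fin n → ℝ,
      (∑ i, (d i - G.mulVec ustar i) ^ 2)
          + lam * ∑ j, ω j * |D.mulVec ustar j| ^ (p j)
        ≤ (∑ i, (d i - G.mulVec u i) ^ 2)
          + lam * ∑ j, ω j * |D.mulVec u j| ^ (p j) := by
  classical
  let L : (Fin n → ℝ) →ₗ[ℝ] (Fin m → ℝ) × (Fin l → ℝ) := G.mulVecLin.prod D.mulVecLin
  have hLinj : LinearMap.ker L = ⊥ := by
    rw [LinearMap.ker_eq_bot']
    intro u hu
    have h1 := congrArg Prod.fst hu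
    have h2 := congrArg Prod.snd hu
    exact hker u h1 h2
  have hL : Topology.IsClosedEmbedding L := LinearMap.isClosedEmbedding_of_injective hLinj
  let J : (Fin n → ℝ) → ℝ := fun u => (∑ i, (d i - G.mulVec u i) ^ 2)
          + lam * ∑ j, ω j * |D.mulVec u j| ^ (p j)
  have hJ : Continuous J := by
    have hG : Continuous fun u : Fin n → ℝ => G.mulVec u :=
      Continuous.matrix_mulVec continuous_const continuous_id
    have hD : Continuous fun u : Fin n → ℝ => D.mulVec u :=
      Continuous.matrix_mulVec continuous_const continuous_id
    refine Continuous.add ?_ (continuous_const.mul ?_)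
    · refine continuous_finsetSum _ fun i _ => ?_
      exact (continuous_const.sub ((continuous_apply i).comp hG)).pow 2
    · refine continuous_finsetSum _ fun j _ => continuous_const.mul ?_
      exact ((continuous_apply j).comp hD).abs.rpow_const
        fun _ => Or.inr (zero_le_one.trans (hp j))
  obtain ⟨u, hu⟩ := hJ.exists_forall_le' (0 : Fin n → ℝ) (by
    rw [Filter.Eventually, Filter.mem_cocompact]
    let M := J 0
    let A : Fin m → ℝ := fun i => |d i| + M + 1
    let B : Fin l → ℝ := fun j => 1 + M / (lam * ω j)
    refine ⟨L ⁻¹' (Set.Icc (-A) A ×ˢ Set.Icc (-B) B),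
      hL.isCompact_preimage (isCompact_Icc.prod isCompact_Icc), ?_⟩
    intro u hu
    by_contra hlt
    have hlt : J u ≤ M := (not_le.mp hlt).le
    apply hu
    have t1 : ∀ i ∈ Finset.univ, 0 ≤ (d i - G.mulVec u i) ^ 2 := fun i _ => sq_nonneg _
    have t2 : ∀ j ∈ Finset.univ, 0 ≤ ω j * |D.mulVec u j| ^ (p j) := fun j _ =>
      mul_nonneg (hω j).le (Real.rpow_nonneg (abs_nonneg _) _)
    have s1 := Finset.sum_nonneg t1
    have s2 := mul_nonneg hlam.le (Finset.sum_nonneg t2)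
    have hlt' : (∑ i, (d i - G.mulVec u i) ^ 2)
          + lam * ∑ j, ω j * |D.mulVec u j| ^ (p j) ≤ M := hlt
    have hM : 0 ≤ M := by linarith
    have a1 : ∀ i, |G.mulVec u i| ≤ A i := by
      intro i
      have h := Finset.single_le_sum t1 (Finset.mem_univ i)
      have h3 : |d i - G.mulVec u i| ^ 2 ≤ M := by rw [sq_abs]; linarith
      have h4 : |d i - G.mulVec u i| ≤ M + 1 := by
        nlinarith [sq_nonneg (|d i - G.mulVec u i| - 1)]
      have h5 : |G.mulVec u i| ≤ |d i| + |d i - G.mulVec u i| := by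
        have := abs_sub (d i) (d i - G.mulVec u i)
        rwa [sub_sub_cancel] at this
      change _ ≤ |d i| + M + 1
      linarith
    have b1 : ∀ j, |D.mulVec u j| ≤ B j := by
      intro j
      have hc : 0 < lam * ω j := mul_pos hlam (hω j)
      have h := mul_le_mul_of_nonneg_left
        (Finset.single_le_sum t2 (Finset.mem_univ j)) hlam.le
      have h0 : 0 ≤ M / (lam * ω j) := div_nonneg hM hc.le
      change _ ≤ 1 + M / (lam * ω j)
      rcases le_total |D.mulVec u j| 1 with h1 | h1
      · linarith
      · have h2 := Real.self_le_rpow_of_one_le h1 (hp j)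
        have h3 : |D.mulVec u j| ^ (p j) ≤ M / (lam * ω j) := by
          rw [le_div_iff₀ hc]
          linarith
        linarith
    exact ⟨⟨fun i => (abs_le.mp (a1 i)).1, fun i => (abs_le.mp (a1 i)).2⟩,
      ⟨fun j => (abs_le.mp (b1 j)).1, fun j => (abs_le.mp (b1 j)).2⟩⟩)
  exact ⟨u, hu⟩
end

section
/- Let k be a positive integer, p ≥ 1, c > 0, and x ∈ ℝ^k with x ≠ 0. If t* ∈ ℝ is a global minimizer over ℝ of the scalar function t ↦ |t|^p + (c/2)(t − ‖x‖₂)², then the vector v* = t* · x / ‖x‖₂ is a global minimizer over ℝ^k of the function v ↦ ‖v‖₂^p + (c/2)‖v − x‖₂². -/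
/-- Norm-composition rule for the proximal operator: if `t*` globally minimizes
`t ↦ |t|^p + (c/2)(t − ‖x‖₂)²` on `ℝ`, then `v* = t* • x/‖x‖₂` globally minimizes
`v ↦ ‖v‖₂^p + (c/2)‖v − x‖₂²` on `ℝ^k` (for `x ≠ 0`). -/
theorem stmt_7 (k : ℕ) (hk : 0 < k) (p c : ℝ) (hp : 1 ≤ p) (hc : 0 < c)
    (x : EuclideanSpace ℝ (Fin k)) (hx : x ≠ 0) (tstar : ℝ)
    (htstar : ∀ t : ℝ,
      |tstar| ^ p + (c / 2) * (tstar - ‖x‖) ^ 2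
        ≤ |t| ^ p + (c / 2) * (t - ‖x‖) ^ 2) :
    ∀ v : EuclideanSpace ℝ (Fin k),
      ‖tstar • (‖x‖⁻¹ • x)‖ ^ p + (c / 2) * ‖tstar • (‖x‖⁻¹ • x) - x‖ ^ 2
        ≤ ‖v‖ ^ p + (c / 2) * ‖v - x‖ ^ 2 := by
  intro v
  have hn : ‖x‖ ≠ 0 := norm_ne_zero_iff.mpr hx
  have h1 : ‖tstar • (‖x‖⁻¹ • x)‖ = |tstar| := by
    rw [norm_smul, norm_smul, norm_inv, norm_norm, inv_mul_cancel₀ hn, mul_one, Real.norm_eq_abs]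
  have h2 : tstar • (‖x‖⁻¹ • x) - x = (tstar - ‖x‖) • (‖x‖⁻¹ • x) := by
    rw [sub_smul, smul_smul ‖x‖, mul_inv_cancel₀ hn, one_smul]
  have h3 : ‖tstar • (‖x‖⁻¹ • x) - x‖ ^ 2 = (tstar - ‖x‖) ^ 2 := by
    rw [h2, norm_smul, norm_smul, norm_inv, norm_norm, inv_mul_cancel₀ hn, mul_one,
      Real.norm_eq_abs, sq_abs]
  have h4 : (‖v‖ - ‖x‖) ^ 2 ≤ ‖v - x‖ ^ 2 := by
    rw [← sq_abs]
    exact pow_le_pow_left₀ (abs_nonneg _) (abs_norm_sub_norm_le v x) 2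
  have h5 := htstar ‖v‖
  rw [abs_norm] at h5
  rw [h1, h3]
  have h6 := mul_le_mul_of_nonneg_left h4 (half_pos hc).le
  linarith
end

section
/- Let p ≥ 1, c > 0, and q ≥ 0. If t* ∈ ℝ is a global minimizer of the function t ↦ |t|^p + (c/2)(t − q)², then 0 ≤ t* ≤ q. -/
/-- Shrinkage toward zero: for `p ≥ 1`, `c > 0`, `q ≥ 0`, any global minimizer `t*` of
`t ↦ |t|^p + (c/2)(t − q)²` satisfies `0 ≤ t* ≤ q`. -/
theorem stmt_13 (p c q : ℝ) (hp : 1 ≤ p) (hc : 0 < c) (hq : 0 ≤ q) (tstar : ℝ)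
    (htstar : ∀ t : ℝ,
      |tstar| ^ p + (c / 2) * (tstar - q) ^ 2 ≤ |t| ^ p + (c / 2) * (t - q) ^ 2) :
    0 ≤ tstar ∧ tstar ≤ q := by
  constructor
  · by_contra! h
    have h0 := htstar 0
    rw [abs_zero, Real.zero_rpow (by linarith)] at h0
    have h1 : 0 ≤ |tstar| ^ p := by positivity
    have h2 : 0 < c * (tstar ^ 2 - 2 * tstar * q) := by
      apply mul_pos hc
      nlinarith [mul_nonneg (neg_nonneg.2 h.le) hq, mul_pos_of_neg_of_neg h h]
    nlinarith
  · by_contra! h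
    have h0 := htstar q
    have h1 : |q| ^ p ≤ |tstar| ^ p := by
      apply Real.rpow_le_rpow (abs_nonneg _) _ (by linarith)
      rw [abs_of_nonneg hq, abs_of_nonneg (by linarith)]
      exact h.le
    have h2 : 0 < c / 2 * (tstar - q) ^ 2 := by
      have : 0 < tstar - q := by linarith
      positivity
    rw [sub_self] at h0
    nlinarith
end

section
/- Let n, k be positive integers, ρ > 0, and for each i = 1,…,n let ω_i > 0 and p_i ∈ [1,2]; let x = (x_1,…,x_n) with each x_i ∈ ℝ^k. Then the function v = (v_1,…,v_n) ↦ Σ_{i=1}^{n} ω_i ‖v_i‖₂^{p_i} + (ρ/2) Σ_{i=1}^{n} ‖v_i − x_i‖₂² has a unique global minimizer v* on (ℝ^k)^n, and for each i: if x_i = 0 then v*_i = 0; and if x_i ≠ 0 then v*_i = t*_i · x_i / ‖x_i‖₂, where t*_i is the unique global minimizer over ℝ of the scalar function t ↦ |t|^{p_i} + (ρ/(2ω_i))(t − ‖x_i‖₂)². -/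
lemma aux_unique {E : Type*} [NormedAddCommGroup E] [InnerProductSpace ℝ E] (ω c p : ℝ)
    (hω : 0 < ω) (hc : 0 < c) (hp : 1 ≤ p) (x u v : E)
    (hu : ∀ w : E, ω * ‖u‖ ^ p + c * ‖u - x‖ ^ 2 ≤ ω * ‖w‖ ^ p + c * ‖w - x‖ ^ 2)
    (hv : ∀ w : E, ω * ‖v‖ ^ p + c * ‖v - x‖ ^ 2 ≤ ω * ‖w‖ ^ p + c * ‖w - x‖ ^ 2) :
    u = v := by
  have h1 := hu ((1 / 2 : ℝ) • (u + v))
  have h2 := hv ((1 / 2 : ℝ) • (u + v))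
  have hconv : ‖(1 / 2 : ℝ) • (u + v)‖ ^ p ≤ (1 / 2) * ‖u‖ ^ p + (1 / 2) * ‖v‖ ^ p := by
    have h3 : ‖(1 / 2 : ℝ) • (u + v)‖ ≤ (1 / 2) * ‖u‖ + (1 / 2) * ‖v‖ := by
      rw [norm_smul]
      have := norm_add_le u v
      norm_num
      linarith
    have h4 := (convexOn_rpow hp).2 (show ‖u‖ ∈ Set.Ici (0 : ℝ) from norm_nonneg u)
      (show ‖v‖ ∈ Set.Ici (0 : ℝ) from norm_nonneg v)
      (show (0 : ℝ) ≤ 1 / 2 by norm_num) (show (0 : ℝ) ≤ 1 / 2 by norm_num) (by norm_num)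
    simp only [smul_eq_mul] at h4
    exact (Real.rpow_le_rpow (norm_nonneg _) h3 (by linarith)).trans h4
  have hpar := parallelogram_law_with_norm ℝ (u - x) (v - x)
  have e1 : (u - x) - (v - x) = u - v := by abel
  have e2 : ‖(u - x) + (v - x)‖ = 2 * ‖(1 / 2 : ℝ) • (u + v) - x‖ := by
    have : (u - x) + (v - x) = (2 : ℝ) • ((1 / 2 : ℝ) • (u + v) - x) := by
      module
    rw [this, norm_smul]; norm_num
  rw [e1, e2] at hpar
  have h5 := mul_le_mul_of_nonneg_left hconv hω.le
  have h6 : c * (‖u - v‖ * ‖u - v‖) ≤ 0 := by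
    have := congrArg (fun z => c * z) hpar
    nlinarith
  have h7 : ‖u - v‖ * ‖u - v‖ ≤ 0 := by
    by_contra h
    push Not at h
    have := mul_pos hc h
    linarith
  have h8 : ‖u - v‖ = 0 := by
    exact mul_self_eq_zero.mp (le_antisymm h7 (mul_self_nonneg _))
  exact sub_eq_zero.mp (norm_eq_zero.mp h8)

lemma aux_scalar (c p a : ℝ) (hc : 0 < c) (hp : 1 ≤ p) (ha : 0 ≤ a) :
    ∃ t : ℝ, 0 ≤ t ∧ ∀ s : ℝ, |t| ^ p + c * (t - a) ^ 2 ≤ |s| ^ p + c * (s - a) ^ 2 := by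
  have hcont : Continuous (fun s : ℝ => |s| ^ p + c * (s - a) ^ 2) := by
    have : Continuous (fun s : ℝ => |s| ^ p) :=
      continuous_abs.rpow_const (fun _ => Or.inr (by linarith))
    fun_prop
  obtain ⟨t, ht, hmin⟩ := (isCompact_Icc (a := (0 : ℝ)) (b := a)).exists_isMinOn
    ⟨0, by simp [ha]⟩ hcont.continuousOn
  have hpos : ∀ s : ℝ, 0 ≤ s → |t| ^ p + c * (t - a) ^ 2 ≤ |s| ^ p + c * (s - a) ^ 2 := by
    intro s hs
    rcases le_or_gt s a with h | h
    · exact hmin ⟨hs, h⟩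
    · have h1 : |t| ^ p + c * (t - a) ^ 2 ≤ |a| ^ p + c * (a - a) ^ 2 :=
        hmin (show a ∈ Set.Icc 0 a from ⟨ha, le_rfl⟩)
      have h2 : |a| ^ p ≤ |s| ^ p :=
        Real.rpow_le_rpow (abs_nonneg _) (by rw [abs_of_nonneg ha, abs_of_nonneg hs]; exact h.le)
          (by linarith)
      have h3 : 0 ≤ c * (s - a) ^ 2 := by positivity
      simp only [sub_self] at h1
      nlinarith
  refine ⟨t, ht.1, fun s => ?_⟩
  rcases le_or_gt 0 s with h | h
  · exact hpos s h
  · have h1 := hpos (-s) (by linarith)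
    rw [abs_neg] at h1
    have h2 : (-s - a) ^ 2 ≤ (s - a) ^ 2 := by nlinarith
    have := mul_le_mul_of_nonneg_left h2 hc.le
    linarith

lemma aux_vec {E : Type*} [NormedAddCommGroup E] [InnerProductSpace ℝ E] (ω ρ p : ℝ)
    (hω : 0 < ω) (hρ : 0 < ρ) (hp : 1 ≤ p) (x : E) :
    ∃ v : E, (∀ w : E, ω * ‖v‖ ^ p + ρ / 2 * ‖v - x‖ ^ 2 ≤ ω * ‖w‖ ^ p + ρ / 2 * ‖w - x‖ ^ 2) ∧
      (x = 0 → v = 0) ∧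
        (x ≠ 0 → ∃ tstar : ℝ,
          (∀ t : ℝ,
              |tstar| ^ p + (ρ / (2 * ω)) * (tstar - ‖x‖) ^ 2
                ≤ |t| ^ p + (ρ / (2 * ω)) * (t - ‖x‖) ^ 2) ∧
          (∀ t : ℝ,
              (∀ s : ℝ,
                |t| ^ p + (ρ / (2 * ω)) * (t - ‖x‖) ^ 2
                  ≤ |s| ^ p + (ρ / (2 * ω)) * (s - ‖x‖) ^ 2) →
              t = tstar) ∧
          v = tstar • (‖x‖⁻¹ • x)) := by
  by_cases hx : x = 0
  · refine ⟨0, fun w => ?_, fun _ => rfl, fun h => absurd hx h⟩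
    subst hx
    rw [norm_zero, Real.zero_rpow (by linarith)]
    simp only [sub_self, norm_zero]
    have : 0 ≤ ω * ‖w‖ ^ p + ρ / 2 * ‖w - 0‖ ^ 2 := by positivity
    linarith
  · have hc : 0 < ρ / (2 * ω) := by positivity
    obtain ⟨t, ht0, ht⟩ := aux_scalar (ρ / (2 * ω)) p ‖x‖ hc hp (norm_nonneg x)
    have hxn : 0 < ‖x‖ := norm_pos_iff.mpr hx
    refine ⟨t • (‖x‖⁻¹ • x), fun w => ?_, fun h => absurd h hx, fun _ => ⟨t, ht, ?_, rfl⟩⟩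
    · have n1 : ‖t • (‖x‖⁻¹ • x)‖ = |t| := by
        rw [norm_smul, norm_smul, norm_inv, norm_norm, inv_mul_cancel₀ hxn.ne', mul_one,
          Real.norm_eq_abs]
      have n2 : ‖t • (‖x‖⁻¹ • x) - x‖ ^ 2 = (t - ‖x‖) ^ 2 := by
        have : t • (‖x‖⁻¹ • x) - x = (t - ‖x‖) • (‖x‖⁻¹ • x) := by
          rw [sub_smul, smul_smul ‖x‖, mul_inv_cancel₀ hxn.ne', one_smul]
        rw [this, norm_smul, norm_smul, norm_inv, norm_norm, inv_mul_cancel₀ hxn.ne', mul_one,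
          Real.norm_eq_abs, sq_abs]
      rw [n1, n2]
      have h1 := mul_le_mul_of_nonneg_left (ht ‖w‖) hω.le
      have e : ∀ z : ℝ, ω * (ρ / (2 * ω) * z) = ρ / 2 * z := by
        intro z; field_simp
      rw [mul_add, mul_add, e, e, abs_norm] at h1
      have h2 : (‖w‖ - ‖x‖) ^ 2 ≤ ‖w - x‖ ^ 2 :=
        sq_le_sq' (by have := norm_sub_norm_le x w; rw [norm_sub_rev] at this; linarith)
          (norm_sub_norm_le w x)
      have h3 := mul_le_mul_of_nonneg_left h2 (half_pos hρ).le
      linarith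
    · intro s hs
      refine aux_unique (E := ℝ) 1 (ρ / (2 * ω)) p one_pos hc hp ‖x‖ s t ?_ ?_
      · intro w; simpa only [Real.norm_eq_abs, sq_abs, one_mul] using hs w
      · intro w; simpa only [Real.norm_eq_abs, sq_abs, one_mul] using ht w


/-- The ADMM `v`-suboptimization for the weighted inhomogeneous regularization:
for `ρ > 0`, weights `ω i > 0`, exponents `p i ∈ [1,2]`, the function
`v ↦ ∑ i ω_i ‖v_i‖₂^{p_i} + (ρ/2) ∑ i ‖v_i − x_i‖₂²` has a unique global minimizer
`v*`; moreover `v*_i = 0` when `x_i = 0`, and otherwise `v*_i = t*_i • x_i/‖x_i‖₂`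
where `t*_i` is the unique global minimizer of
`t ↦ |t|^{p_i} + (ρ/(2ω_i))(t − ‖x_i‖₂)²`. -/
theorem stmt_15 (n k : ℕ) (hn : 0 < n) (hk : 0 < k) (ρ : ℝ) (hρ : 0 < ρ)
    (ω p : Fin n → ℝ) (hω : ∀ i, 0 < ω i) (hp : ∀ i, p i ∈ Set.Icc (1 : ℝ) 2)
    (x : Fin n → EuclideanSpace ℝ (Fin k)) :
    ∃ vstar : Fin n → EuclideanSpace ℝ (Fin k),
      (∀ v : Fin n → EuclideanSpace ℝ (Fin k),
          (∑ i, ω i * ‖vstar i‖ ^ (p i)) + (ρ / 2) * ∑ i, ‖vstar i - x i‖ ^ 2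
            ≤ (∑ i, ω i * ‖v i‖ ^ (p i)) + (ρ / 2) * ∑ i, ‖v i - x i‖ ^ 2) ∧
      (∀ v : Fin n → EuclideanSpace ℝ (Fin k),
          (∀ w : Fin n → EuclideanSpace ℝ (Fin k),
            (∑ i, ω i * ‖v i‖ ^ (p i)) + (ρ / 2) * ∑ i, ‖v i - x i‖ ^ 2
              ≤ (∑ i, ω i * ‖w i‖ ^ (p i)) + (ρ / 2) * ∑ i, ‖w i - x i‖ ^ 2) →
          v = vstar) ∧
      (∀ i : Fin n,
        (x i = 0 → vstar i = 0) ∧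
        (x i ≠ 0 → ∃ tstar : ℝ,
          (∀ t : ℝ,
              |tstar| ^ (p i) + (ρ / (2 * ω i)) * (tstar - ‖x i‖) ^ 2
                ≤ |t| ^ (p i) + (ρ / (2 * ω i)) * (t - ‖x i‖) ^ 2) ∧
          (∀ t : ℝ,
              (∀ s : ℝ,
                |t| ^ (p i) + (ρ / (2 * ω i)) * (t - ‖x i‖) ^ 2
                  ≤ |s| ^ (p i) + (ρ / (2 * ω i)) * (s - ‖x i‖) ^ 2) →
              t = tstar) ∧
          vstar i = tstar • (‖x i‖⁻¹ • x i))) := by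
  choose vs hmin h0 h1 using fun i => aux_vec (ω i) ρ (p i) (hω i) hρ (hp i).1 (x i)
  have hs : ∀ v : Fin n → EuclideanSpace ℝ (Fin k),
      (∑ i, ω i * ‖v i‖ ^ (p i)) + (ρ / 2) * ∑ i, ‖v i - x i‖ ^ 2
        = ∑ i, (ω i * ‖v i‖ ^ (p i) + ρ / 2 * ‖v i - x i‖ ^ 2) := by
    intro v
    rw [Finset.mul_sum, Finset.sum_add_distrib]
  refine ⟨vs, fun v => ?_, fun v hv => ?_, fun i => ⟨h0 i, h1 i⟩⟩
  · rw [hs, hs]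
    exact Finset.sum_le_sum fun i _ => hmin i (v i)
  · have h := hv vs
    rw [hs, hs] at h
    have heq := (Finset.sum_eq_sum_iff_of_le (fun i _ => hmin i (v i))).mp
      (le_antisymm (Finset.sum_le_sum fun i _ => hmin i (v i)) h)
    funext i
    refine aux_unique (ω i) (ρ / 2) (p i) (hω i) (half_pos hρ) (hp i).1 (x i) (v i) (vs i) ?_ (hmin i)
    intro w
    rw [← heq i (Finset.mem_univ i)]
    exact hmin i w
end
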